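/- arXiv:1504.03548 — 2 statements merged into one kernel-verified Lean document; each statement's English description precedes it below -/
import Mathlib

section
/- Let C be a connected strongly graded k-coalgebra and let (X, ρ) be a graded right C-comodule. Then for all integers 0 ≤ j ≤ i < m, Ker(ρ_{i,m−i} : X_m → X_i ⊗ C_{m−i}) ⊆ Ker(ρ_{j,m−j} : X_m → X_j ⊗ C_{m−j}). -/
/-!
Coassociativity, read in tridegree `(j, a, b)` with `i = j + a` and `m = j + a + b`, says
`(ρ_{j,a} ⊗ id) ∘ ρ_{i,b} = (id ⊗ Δ_{a,b}) ∘ ρ_{j,a+b}`. If `ρ_{i,b} x = 0`, then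
`(id ⊗ Δ_{a,b}) (ρ_{j,a+b} x) = 0`. Since `C` is strongly graded, `Δ_{a,b}` is injective on
`C_{a+b}`, and it stays injective after tensoring with the `k`-vector space `X_j`, so
`ρ_{j,a+b} x = 0`.

The componentwise identity (`coassoc_component`) comes from applying the homogeneous projections
to the coassociativity of `ρ`; `map_proj_comp` identifies the projected (co)action with the given
components, and `comp_subtype_proj` says these components factor through one homogeneous piece.
-/


open TensorProduct

noncomputable section
namespace Koszul

variable (k : Type) [Field k]
variable (C : Type) [AddCommGroup C] [Module k C] [Coalgebra k C]
variable (𝒞 : ℕ → Submodule k C)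

/-- The data exhibiting `C = ⊕ₙ Cₙ` as a connected graded coalgebra: a grouplike element `g`
spanning `C₀`, the counit vanishing in positive degrees, and the components
`Δc p q : C_{p+q} → C_p ⊗ C_q` of the comultiplication (extended by `0` to the other
homogeneous components of `C`). -/
structure GradedCoalgebraData where
  g : C
  Δc : ∀ p q : ℕ, C →ₗ[k] (↥(𝒞 p) ⊗[k] ↥(𝒞 q))
  hC0 : 𝒞 0 = Submodule.span k {g}
  hgrp : Coalgebra.comul (R := k) g = g ⊗ₜ[k] g
  hcu : Coalgebra.counit (R := k) g = 1
  hcounit : ∀ n, 1 ≤ n → ∀ x ∈ 𝒞 n, Coalgebra.counit (R := k) x = 0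
  hΔc : ∀ n, ∀ x ∈ 𝒞 n, Coalgebra.comul (R := k) x =
    ∑ p ∈ Finset.range (n+1),
      (TensorProduct.map (𝒞 p).subtype (𝒞 (n-p)).subtype) (Δc p (n-p) x)
  hΔc0 : ∀ p q n, n ≠ p + q → ∀ x ∈ 𝒞 n, Δc p q x = 0

/-- `C` is strongly graded: every component `Δ_{p,q} : C_{p+q} → C_p ⊗ C_q` is injective. -/
def GradedCoalgebraData.Strong (D : GradedCoalgebraData k C 𝒞) : Prop :=
  ∀ p q : ℕ, ∀ x ∈ 𝒞 (p + q), D.Δc p q x = 0 → x = 0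

/-- The data of a graded right `C`-comodule structure on `X = ⊕ₙ Xₙ`: a counital and
coassociative coaction `ρ` together with its components `ρc p q : X_{p+q} → X_p ⊗ C_q`
(extended by `0` to the other homogeneous components of `X`). -/
structure GradedComoduleData (X : Type) [AddCommGroup X] [Module k X]
    (𝒳 : ℕ → Submodule k X) where
  ρ : X →ₗ[k] X ⊗[k] C
  ρc : ∀ p q : ℕ, X →ₗ[k] (↥(𝒳 p) ⊗[k] ↥(𝒞 q))
  coassoc : ∀ x, (LinearMap.rTensor C ρ) (ρ x) =
    (TensorProduct.assoc k X C C).symm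
      ((LinearMap.lTensor X (Coalgebra.comul (R := k))) (ρ x))
  counit_law : ∀ x,
    (TensorProduct.rid k X) ((LinearMap.lTensor X (Coalgebra.counit (R := k))) (ρ x)) = x
  hρc : ∀ n, ∀ x ∈ 𝒳 n, ρ x =
    ∑ p ∈ Finset.range (n+1),
      (TensorProduct.map (𝒳 p).subtype (𝒞 (n-p)).subtype) (ρc p (n-p) x)
  hρc0 : ∀ p q n, n ≠ p + q → ∀ x ∈ 𝒳 n, ρc p q x = 0

/-- The projection of a graded space onto its homogeneous piece of degree `n`. -/
def proj {E : Type} [AddCommGroup E] [Module k E] (ℰ : ℕ → Submodule k E)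
    [DirectSum.Decomposition ℰ] (n : ℕ) : E →ₗ[k] ℰ n :=
  DirectSum.component k ℕ (fun n => ℰ n) n ∘ₗ (DirectSum.decomposeLinearEquiv ℰ).toLinearMap

section

variable {k}
variable {E A B M : Type} [AddCommGroup E] [Module k E] [AddCommGroup A] [Module k A]
  [AddCommGroup B] [Module k B] [AddCommGroup M] [Module k M]
variable (ℰ : ℕ → Submodule k E) [DirectSum.Decomposition ℰ]
variable (𝒜 : ℕ → Submodule k A) [DirectSum.Decomposition 𝒜]
variable (ℬ : ℕ → Submodule k B) [DirectSum.Decomposition ℬ]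

lemma proj_comp_subtype_same (n : ℕ) : proj k ℰ n ∘ₗ (ℰ n).subtype = LinearMap.id := by
  ext x
  simp [proj, DirectSum.component.lof_self]

lemma proj_comp_subtype_ne {n n' : ℕ} (h : n' ≠ n) : proj k ℰ n ∘ₗ (ℰ n').subtype = 0 := by
  ext x
  simp [proj, DirectSum.component.of, h]

lemma linearMap_ext_homogeneous {f f' : E →ₗ[k] M} (h : ∀ n, ∀ x ∈ ℰ n, f x = f' x) : f = f' := by
  ext x
  induction x using DirectSum.Decomposition.inductionOn ℰ with
  | zero => simp
  | homogeneous x => exact h _ _ x.2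
  | add x y hx hy => simp [hx, hy]

/-- A linear map vanishing in all degrees but `n` factors through the projection onto
degree `n`. -/
lemma comp_subtype_proj (n : ℕ) (f : E →ₗ[k] M) (hf : ∀ n', n' ≠ n → ∀ x ∈ ℰ n', f x = 0) :
    (f ∘ₗ (ℰ n).subtype) ∘ₗ proj k ℰ n = f := by
  refine linearMap_ext_homogeneous ℰ fun n' x hx => ?_
  by_cases h : n' = n
  · subst h
    have := LinearMap.congr_fun (proj_comp_subtype_same ℰ n') ⟨x, hx⟩
    simp only [LinearMap.comp_apply, Submodule.subtype_apply, LinearMap.id_apply] at this ⊢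
    rw [this]
  · have := LinearMap.congr_fun (proj_comp_subtype_ne ℰ h) ⟨x, hx⟩
    simp only [LinearMap.comp_apply, Submodule.subtype_apply, LinearMap.zero_apply] at this ⊢
    rw [this, hf n' h x hx]
    simp

/-- If a linear map `f : E → A ⊗ B` is the sum of its components `fc p q` in each degree, then
projecting `f` to `A_p ⊗ B_q` recovers `fc p q`. It applies to both `Δ` and `ρ`. -/
lemma map_proj_comp (f : E →ₗ[k] A ⊗[k] B) (fc : ∀ p q : ℕ, E →ₗ[k] (↥(𝒜 p) ⊗[k] ↥(ℬ q)))
    (hfc : ∀ n, ∀ x ∈ ℰ n, f x = ∑ p ∈ Finset.range (n+1),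
      (TensorProduct.map (𝒜 p).subtype (ℬ (n-p)).subtype) (fc p (n-p) x))
    (hfc0 : ∀ p q n, n ≠ p + q → ∀ x ∈ ℰ n, fc p q x = 0) (p q : ℕ) :
    TensorProduct.map (proj k 𝒜 p) (proj k ℬ q) ∘ₗ f = fc p q := by
  refine linearMap_ext_homogeneous ℰ fun n x hx => ?_
  rw [LinearMap.comp_apply, hfc n x hx, map_sum]
  have key : ∀ p' q', p' ≠ p ∨ q' ≠ q → ∀ t, TensorProduct.map (proj k 𝒜 p) (proj k ℬ q)
      (TensorProduct.map (𝒜 p').subtype (ℬ q').subtype t) = 0 := by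
    intro p' q' h t
    rw [← LinearMap.comp_apply, ← TensorProduct.map_comp]
    rcases h with h | h
    · simp [proj_comp_subtype_ne 𝒜 h]
    · simp [proj_comp_subtype_ne ℬ h]
  by_cases h : n = p + q
  · subst h
    rw [Finset.sum_eq_single p]
    · rw [Nat.add_sub_cancel_left, ← LinearMap.comp_apply, ← TensorProduct.map_comp,
        proj_comp_subtype_same, proj_comp_subtype_same]
      simp
    · exact fun p' _ hp' => key _ _ (Or.inl hp') _
    · intro hp
      exact absurd (Finset.mem_range.2 (by omega)) hp
  · rw [hfc0 p q n h x hx]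
    refine Finset.sum_eq_zero fun p' hp' => key _ _ ?_ _
    have := Finset.mem_range.1 hp'
    omega

end

section

variable {k C 𝒞}

/-- Coassociativity of the coaction in tridegree `(j, a, b)`:
`(ρ_{j,a} ⊗ id) ∘ ρ_{j+a,b} = (id ⊗ Δ_{a,b}) ∘ ρ_{j,a+b}`, up to the associator. -/
lemma coassoc_component [DirectSum.Decomposition 𝒞] (D : GradedCoalgebraData k C 𝒞)
    {X : Type} [AddCommGroup X] [Module k X] {𝒳 : ℕ → Submodule k X}
    [DirectSum.Decomposition 𝒳] (R : GradedComoduleData k C 𝒞 X 𝒳) (j a b : ℕ) (x : X) :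
    (R.ρc j a ∘ₗ (𝒳 (j + a)).subtype).rTensor (𝒞 b) (R.ρc (j + a) b x) =
      (TensorProduct.assoc k (𝒳 j) (𝒞 a) (𝒞 b)).symm
        ((D.Δc a b ∘ₗ (𝒞 (a + b)).subtype).lTensor (𝒳 j) (R.ρc j (a + b) x)) := by
  have hρ := map_proj_comp 𝒳 𝒳 𝒞 R.ρ R.ρc R.hρc R.hρc0
  have hΔ := map_proj_comp 𝒞 𝒞 𝒞 Coalgebra.comul D.Δc D.hΔc D.hΔc0
  have hl : ∀ t : X ⊗[k] C,
      TensorProduct.map (TensorProduct.map (proj k 𝒳 j) (proj k 𝒞 a)) (proj k 𝒞 b)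
        (R.ρ.rTensor C t) =
      (R.ρc j a ∘ₗ (𝒳 (j + a)).subtype).rTensor (𝒞 b)
        (TensorProduct.map (proj k 𝒳 (j + a)) (proj k 𝒞 b) t) := by
    intro t
    simp only [LinearMap.rTensor, ← LinearMap.comp_apply, ← TensorProduct.map_comp]
    rw [hρ, comp_subtype_proj 𝒳 (j + a) _ fun n h => R.hρc0 j a n h]
    simp
  have hr : ∀ t : X ⊗[k] C,
      TensorProduct.map (proj k 𝒳 j) (TensorProduct.map (proj k 𝒞 a) (proj k 𝒞 b))
        ((Coalgebra.comul (R := k) (A := C)).lTensor X t) =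
      (D.Δc a b ∘ₗ (𝒞 (a + b)).subtype).lTensor (𝒳 j)
        (TensorProduct.map (proj k 𝒳 j) (proj k 𝒞 (a + b)) t) := by
    intro t
    simp only [LinearMap.lTensor, ← LinearMap.comp_apply, ← TensorProduct.map_comp]
    rw [hΔ, comp_subtype_proj 𝒞 (a + b) _ fun n h => D.hΔc0 a b n h]
    simp
  have hassoc : ∀ t : X ⊗[k] (C ⊗[k] C),
      TensorProduct.map (TensorProduct.map (proj k 𝒳 j) (proj k 𝒞 a)) (proj k 𝒞 b)
        ((TensorProduct.assoc k X C C).symm t) =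
      (TensorProduct.assoc k (𝒳 j) (𝒞 a) (𝒞 b)).symm
        (TensorProduct.map (proj k 𝒳 j) (TensorProduct.map (proj k 𝒞 a) (proj k 𝒞 b)) t) :=
    fun t => LinearMap.congr_fun (TensorProduct.map_map_comp_assoc_symm_eq _ _ _) t
  rw [← hρ (j + a) b, ← hρ j (a + b), LinearMap.comp_apply, LinearMap.comp_apply, ← hl, ← hr,
    ← hassoc, R.coassoc]

end

/-- **Statement 9.** Let `C` be a connected strongly graded `k`-coalgebra and `(X, ρ)` a graded
right `C`-comodule.  For all `0 ≤ j ≤ i < m`,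
`Ker (ρ_{i,m-i} : Xₘ → Xᵢ ⊗ C_{m-i}) ⊆ Ker (ρ_{j,m-j} : Xₘ → Xⱼ ⊗ C_{m-j})`. -/
theorem statement9 [DirectSum.Decomposition 𝒞]
    (D : GradedCoalgebraData k C 𝒞) (hstrong : D.Strong)
    (X : Type) [AddCommGroup X] [Module k X] (𝒳 : ℕ → Submodule k X)
    [DirectSum.Decomposition 𝒳] (R : GradedComoduleData k C 𝒞 X 𝒳)
    (i j m : ℕ) (hji : j ≤ i) (him : i < m) :
    ∀ x ∈ 𝒳 m, R.ρc i (m - i) x = 0 → R.ρc j (m - j) x = 0 := by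
  intro x _ hx
  obtain ⟨a, rfl⟩ := Nat.exists_eq_add_of_le hji
  obtain ⟨b, rfl⟩ := Nat.exists_eq_add_of_lt him
  rw [show j + a + b + 1 - (j + a) = b + 1 by omega] at hx
  rw [show j + a + b + 1 - j = a + (b + 1) by omega]
  have hco := coassoc_component D R j a (b + 1) x
  rw [hx, map_zero, eq_comm, LinearEquiv.map_eq_zero_iff] at hco
  have hinj : Function.Injective (D.Δc a (b + 1) ∘ₗ (𝒞 (a + (b + 1))).subtype) := by
    rw [injective_iff_map_eq_zero]
    exact fun c hc => Subtype.ext (hstrong a (b + 1) c c.2 hc)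
  exact (map_eq_zero_iff _ (Module.Flat.lTensor_preserves_injective_linearMap _ hinj)).1 hco

end Koszul
end
end

section
/- Let C be a connected strongly graded k-coalgebra and let (X, ρ) be a graded right C-comodule such that X_i = 0 for all i < n. Then X is strongly graded in degree n (i.e., ρ_{n,q} : X_{n+q} → X_n ⊗ C_q is injective for all q ≥ 0) if and only if ρ_{i,1} : X_{i+1} → X_i ⊗ C₁ is injective for all i ≥ n. -/
/-!
Taking the component of the coassociativity law in tridegree `(n, q, 1)` gives
`(ρ_{n,q} ⊗ id) ∘ ρ_{n+q,1} = (id ⊗ Δ_{q,1}) ∘ ρ_{n,q+1}` (`coassoc_component`). Over a field,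
tensoring preserves injectivity. If all `ρ_{n,q}` are injective, then so is the right-hand side,
because `C` is strongly graded, and hence so is `ρ_{n+q,1}`. Conversely, if all `ρ_{i,1}` with
`i ≥ n` are injective, then injectivity of `ρ_{n,q}` makes the left-hand side injective, hence
also `ρ_{n,q+1}`; this induction starts at `ρ_{n,0}`, which is injective by the counit law
(`eq_zero_of_component_zero`).

The components are handled through the identity `ρ_{p,q} = (π_p ⊗ π_q) ∘ ρ` of maps defined on
all of `X`, with `π` the projections onto homogeneous components (`map_gproj_comp`).
-/

open TensorProduct

noncomputable section
namespace Koszul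

variable (k : Type) [Field k]
variable (C : Type) [AddCommGroup C] [Module k C] [Coalgebra k C]
variable (𝒞 : ℕ → Submodule k C)

section Projections

variable {k} {M : Type} [AddCommGroup M] [Module k M] (ℳ : ℕ → Submodule k M)
  [DirectSum.Decomposition ℳ]

/-- The projection of a graded vector space onto its degree `p` component. -/
def gproj (p : ℕ) : M →ₗ[k] ℳ p :=
  (DirectSum.component k ℕ (fun i => ℳ i) p).comp
    (DirectSum.decomposeLinearEquiv ℳ).toLinearMap

lemma gproj_apply (p : ℕ) (x : M) : gproj ℳ p x = DirectSum.decompose ℳ x p := rfl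

lemma gproj_comp_subtype (p : ℕ) : (gproj ℳ p).comp (ℳ p).subtype = LinearMap.id := by
  ext x
  simp [gproj_apply]

lemma gproj_comp_subtype_ne {p q : ℕ} (h : q ≠ p) :
    (gproj ℳ p).comp (ℳ q).subtype = 0 := by
  ext x
  simpa [gproj_apply] using DirectSum.decompose_of_mem_ne ℳ x.2 h

lemma graded_hom_ext {N : Type} [AddCommGroup N] [Module k N] {f f' : M →ₗ[k] N}
    (h : ∀ n, ∀ x ∈ ℳ n, f x = f' x) : f = f' := by
  ext x
  induction x using DirectSum.Decomposition.inductionOn ℳ with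
  | zero => simp
  | homogeneous m => exact h _ _ m.2
  | add a b ha hb => simp [ha, hb]

/-- A linear map killing all degrees other than `p` factors through the projection to degree
`p`. -/
lemma comp_gproj_of_eq_zero {N : Type} [AddCommGroup N] [Module k N] (f : M →ₗ[k] N) (p : ℕ)
    (h : ∀ n, n ≠ p → ∀ x ∈ ℳ n, f x = 0) :
    (f.comp (ℳ p).subtype).comp (gproj ℳ p) = f := by
  refine graded_hom_ext ℳ fun n x hx => ?_
  rcases eq_or_ne n p with rfl | hn
  · simp [gproj_apply, DirectSum.decompose_of_mem_same ℳ hx]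
  · simp [gproj_apply, DirectSum.decompose_of_mem_ne ℳ hx hn, h n hn x hx]

/-- A degree-preserving map `f : M → M ⊗ N` determines its components: if
`f x = ∑_{p ≤ n} f_{p,n-p} x` in degree `n`, where `f_{p,q}` vanishes outside degree `p + q`,
then `f_{p,q}` is `f` followed by the projection to bidegree `(p, q)`. Both comultiplications
and coactions have this form. -/
lemma map_gproj_comp {A B : Type} [AddCommGroup A] [Module k A] [AddCommGroup B] [Module k B]
    (𝒜 : ℕ → Submodule k A) [DirectSum.Decomposition 𝒜]
    (ℬ : ℕ → Submodule k B) [DirectSum.Decomposition ℬ]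
    (f : M →ₗ[k] A ⊗[k] B) (fc : ∀ p q : ℕ, M →ₗ[k] (↥(𝒜 p) ⊗[k] ↥(ℬ q)))
    (hf : ∀ n, ∀ x ∈ ℳ n, f x = ∑ p ∈ Finset.range (n+1),
      (TensorProduct.map (𝒜 p).subtype (ℬ (n-p)).subtype) (fc p (n-p) x))
    (hf0 : ∀ p q n, n ≠ p + q → ∀ x ∈ ℳ n, fc p q x = 0) (p q : ℕ) :
    (TensorProduct.map (gproj 𝒜 p) (gproj ℬ q)).comp f = fc p q := by
  refine graded_hom_ext ℳ fun n x hx => ?_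
  rw [LinearMap.comp_apply, hf n x hx, map_sum]
  simp only [TensorProduct.map_map]
  rcases eq_or_ne n (p + q) with rfl | hn
  · rw [Finset.sum_eq_single p]
    · rw [Nat.add_sub_cancel_left, gproj_comp_subtype, gproj_comp_subtype]
      simp
    · intro b _ hb
      simp [gproj_comp_subtype_ne 𝒜 hb]
    · simp
  · rw [hf0 p q n hn x hx]
    refine Finset.sum_eq_zero fun b hb => ?_
    rw [Finset.mem_range] at hb
    rcases eq_or_ne b p with rfl | hbp
    · rw [gproj_comp_subtype_ne ℬ (show n - b ≠ q by omega)]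
      simp
    · simp [gproj_comp_subtype_ne 𝒜 hbp]

end Projections

section Comodule

variable {k C 𝒞} [DirectSum.Decomposition 𝒞]
  {X : Type} [AddCommGroup X] [Module k X] {𝒳 : ℕ → Submodule k X}
  [DirectSum.Decomposition 𝒳]

/-- The component of coassociativity in tridegree `(p, q, r)`:
`(ρ_{p,q} ⊗ id) ∘ ρ_{p+q,r} = (id ⊗ Δ_{q,r}) ∘ ρ_{p,q+r}`. -/
lemma coassoc_component_s10 (D : GradedCoalgebraData k C 𝒞)
    (R : GradedComoduleData k C 𝒞 X 𝒳) (p q r : ℕ) (x : X) :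
    LinearMap.rTensor (𝒞 r) ((R.ρc p q).comp (𝒳 (p + q)).subtype) (R.ρc (p + q) r x) =
      (TensorProduct.assoc k (𝒳 p) (𝒞 q) (𝒞 r)).symm
        (LinearMap.lTensor (𝒳 p) ((D.Δc q r).comp (𝒞 (q + r)).subtype)
          (R.ρc p (q + r) x)) := by
  have hρ := map_gproj_comp 𝒳 𝒳 𝒞 R.ρ R.ρc R.hρc R.hρc0
  have hΔ := map_gproj_comp 𝒞 𝒞 𝒞 Coalgebra.comul D.Δc D.hΔc D.hΔc0
  have hl : LinearMap.rTensor (𝒞 r) ((R.ρc p q).comp (𝒳 (p + q)).subtype) (R.ρc (p + q) r x) =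
      TensorProduct.map (TensorProduct.map (gproj 𝒳 p) (gproj 𝒞 q)) (gproj 𝒞 r)
        (LinearMap.rTensor C R.ρ (R.ρ x)) := by
    rw [← hρ (p + q) r]
    simp only [LinearMap.rTensor, ← LinearMap.comp_apply, ← LinearMap.comp_assoc,
      ← TensorProduct.map_comp]
    rw [comp_gproj_of_eq_zero 𝒳 (R.ρc p q) (p + q) (R.hρc0 p q), hρ]
    simp
  have hr : LinearMap.lTensor (𝒳 p) ((D.Δc q r).comp (𝒞 (q + r)).subtype)
        (R.ρc p (q + r) x) =
      TensorProduct.map (gproj 𝒳 p) (TensorProduct.map (gproj 𝒞 q) (gproj 𝒞 r))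
        (LinearMap.lTensor X Coalgebra.comul (R.ρ x)) := by
    rw [← hρ p (q + r)]
    simp only [LinearMap.lTensor, ← LinearMap.comp_apply, ← LinearMap.comp_assoc,
      ← TensorProduct.map_comp]
    rw [comp_gproj_of_eq_zero 𝒞 (D.Δc q r) (q + r) (D.hΔc0 q r), hΔ]
    simp
  rw [hl, hr, R.coassoc]
  generalize LinearMap.lTensor X Coalgebra.comul (R.ρ x) = t
  exact LinearMap.congr_fun (TensorProduct.map_map_comp_assoc_symm_eq _ _ _) t

/-- `ρ_{n,0}` is injective on `X_n`: the counit kills every other component of `ρ x`, so the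
counit law recovers `x` from `ρ_{n,0} x`. -/
lemma eq_zero_of_component_zero (D : GradedCoalgebraData k C 𝒞)
    (R : GradedComoduleData k C 𝒞 X 𝒳) (n : ℕ) (x : X) (hx : x ∈ 𝒳 n) (h : R.ρc n 0 x = 0) :
    x = 0 := by
  rw [← R.counit_law x, R.hρc n x hx, map_sum, map_sum]
  refine Finset.sum_eq_zero fun p hp => ?_
  rw [Finset.mem_range] at hp
  rcases eq_or_ne p n with rfl | hpn
  · rw [Nat.sub_self, h]
    simp
  · have h0 : (Coalgebra.counit (R := k) (A := C)).comp (𝒞 (n - p)).subtype = 0 := by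
      ext c
      exact D.hcounit (n - p) (by omega) c c.2
    simp only [LinearMap.lTensor, TensorProduct.map_map, h0]
    simp

end Comodule

/-- **Statement 11.** Let `C` be a connected strongly graded `k`-coalgebra and `(X, ρ)` a
graded right `C`-comodule with `Xᵢ = 0` for all `i < n`.  Then `X` is strongly graded in
degree `n` (all `ρ_{n,q} : X_{n+q} → Xₙ ⊗ C_q` injective) iff `ρ_{i,1} : X_{i+1} → Xᵢ ⊗ C₁`
is injective for all `i ≥ n`. -/
theorem statement11 [DirectSum.Decomposition 𝒞]
    (D : GradedCoalgebraData k C 𝒞) (hstrong : D.Strong)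
    (X : Type) [AddCommGroup X] [Module k X] (𝒳 : ℕ → Submodule k X)
    [DirectSum.Decomposition 𝒳] (R : GradedComoduleData k C 𝒞 X 𝒳)
    (n : ℕ) (hlow : ∀ i : ℕ, i < n → 𝒳 i = ⊥) :
    (∀ q : ℕ, ∀ x ∈ 𝒳 (n + q), R.ρc n q x = 0 → x = 0) ↔
      (∀ i : ℕ, n ≤ i → ∀ x ∈ 𝒳 (i + 1), R.ρc i 1 x = 0 → x = 0) := by
  have key := coassoc_component_s10 D R
  constructor
  · intro hX i hi x hx h
    obtain ⟨q, rfl⟩ := Nat.exists_eq_add_of_le hi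
    have hinj : Function.Injective ((D.Δc q 1).comp (𝒞 (q + 1)).subtype) :=
      (injective_iff_map_eq_zero _).2 fun c hc => Subtype.ext (hstrong q 1 c c.2 hc)
    have e := key n q 1 x
    rw [h, map_zero, eq_comm, LinearEquiv.map_eq_zero_iff] at e
    exact hX (q + 1) x hx ((injective_iff_map_eq_zero _).1
      (Module.Flat.lTensor_preserves_injective_linearMap (M := 𝒳 n) _ hinj) _ e)
  · intro hX q
    induction q with
    | zero => exact fun x hx h => eq_zero_of_component_zero D R n x hx h
    | succ q ih =>
      intro x hx h
      have hinj : Function.Injective ((R.ρc n q).comp (𝒳 (n + q)).subtype) :=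
        (injective_iff_map_eq_zero _).2 fun y hy => Subtype.ext (ih y y.2 hy)
      have e := key n q 1 x
      rw [h, map_zero, map_zero] at e
      exact hX (n + q) (Nat.le_add_right n q) x hx ((injective_iff_map_eq_zero _).1
        (Module.Flat.rTensor_preserves_injective_linearMap (M := 𝒞 1) _ hinj) _ e)


end Koszul
end
end
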